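/- Let n ≥ 2. There is no unitary operator U on ℂⁿ ⊗ ℂⁿ together with a unit vector ψ₀ ∈ ℂⁿ such that U(α ⊗ ψ₀) = α ⊗ α for every unit vector α ∈ ℂⁿ (the no-cloning theorem: no general cloning device is possible, since by linearity it would take a superposition of two clonable states to an entangled state rather than to the required product state). -/

import Mathlib

/-!
A linear map `L` that clones two linearly independent vectors `x` and `y` sends `c x + d y` to
`c (x ⊗ x) + d (y ⊗ y)`. Read as a matrix, the latter has the `2 × 2` principal minors
`c d (xᵢ yⱼ - xⱼ yᵢ)²`, one of which is nonzero, whereas all `2 × 2` minors of a product vector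
`u ⊗ v` vanish. So `L (c x + d y)` is entangled and in particular is not the clone of `c x + d y`.
-/

open scoped ComplexOrder

noncomputable section

/-- The standard inner product on `ℂ^ι`, conjugate-linear in the first argument. -/
def inn {ι : Type*} [Fintype ι] (x y : ι → ℂ) : ℂ :=
  ∑ i, (starRingEnd ℂ) (x i) * y i

/-- The tensor product of two vectors, with coordinates indexed by pairs. -/
def tens {m n : ℕ} (x : Fin m → ℂ) (y : Fin n → ℂ) : Fin m × Fin n → ℂ :=
  fun p => x p.1 * y p.2

/-- A vector of `ℂᵐ ⊗ ℂⁿ` is entangled if it is not a product vector; no normalization is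
required. This is the property that separates a superposition of clones from a clone. -/
def IsEntangled {m n : ℕ} (z : Fin m × Fin n → ℂ) : Prop :=
  ∀ u v, z ≠ tens u v

/-- The linear map `x ↦ x ⊗ ψ` that adjoins an ancilla in the state `ψ`. -/
def tensRight (m : ℕ) {n : ℕ} (ψ : Fin n → ℂ) : (Fin m → ℂ) →ₗ[ℂ] (Fin m × Fin n → ℂ) where
  toFun x := tens x ψ
  map_add' x y := funext fun p => add_mul (x p.1) (y p.1) (ψ p.2)
  map_smul' c x := funext fun p => mul_assoc c (x p.1) (ψ p.2)

theorem tens_minor_eq_zero {m n : ℕ} (u : Fin m → ℂ) (v : Fin n → ℂ) (i j : Fin m) (k l : Fin n) :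
    tens u v (i, k) * tens u v (j, l) - tens u v (i, l) * tens u v (j, k) = 0 := by
  simp only [tens]
  ring

theorem isEntangled_of_minor_ne_zero {m n : ℕ} {z : Fin m × Fin n → ℂ} {i j : Fin m} {k l : Fin n}
    (hz : z (i, k) * z (j, l) - z (i, l) * z (j, k) ≠ 0) : IsEntangled z := by
  rintro u v rfl
  exact hz (tens_minor_eq_zero u v i j k l)

theorem exists_minor_ne_zero_of_linearIndependent {R ι : Type*} [CommRing R] [Nontrivial R]
    {x y : ι → R} (hxy : LinearIndependent R ![x, y]) : ∃ i j, x i * y j - x j * y i ≠ 0 := by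
  by_contra! hminor
  obtain ⟨i, hi⟩ : ∃ i, x i ≠ 0 := Function.ne_iff.mp (hxy.ne_zero 0)
  have hrel : (-y i) • x + x i • y = 0 := by
    ext j
    simp only [Pi.add_apply, Pi.smul_apply, smul_eq_mul, Pi.zero_apply]
    linear_combination hminor i j
  exact hi (LinearIndependent.pair_iff.mp hxy _ _ hrel).2

theorem isEntangled_smul_tens_self_add_smul_tens_self {n : ℕ} {x y : Fin n → ℂ} {c d : ℂ}
    (hxy : LinearIndependent ℂ ![x, y]) (hc : c ≠ 0) (hd : d ≠ 0) :
    IsEntangled (c • tens x x + d • tens y y) := by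
  obtain ⟨i, j, hij⟩ := exists_minor_ne_zero_of_linearIndependent hxy
  refine isEntangled_of_minor_ne_zero (i := i) (j := j) (k := i) (l := j) ?_
  convert mul_ne_zero (mul_ne_zero hc hd) (pow_ne_zero 2 hij) using 1
  simp only [tens, Pi.add_apply, Pi.smul_apply, smul_eq_mul]
  ring

theorem isEntangled_map_smul_add_smul {n : ℕ} {L : (Fin n → ℂ) →ₗ[ℂ] (Fin n × Fin n → ℂ)}
    {x y : Fin n → ℂ} {c d : ℂ} (hx : L x = tens x x) (hy : L y = tens y y)
    (hxy : LinearIndependent ℂ ![x, y]) (hc : c ≠ 0) (hd : d ≠ 0) :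
    IsEntangled (L (c • x + d • y)) := by
  rw [map_add, map_smul, map_smul, hx, hy]
  exact isEntangled_smul_tens_self_add_smul_tens_self hxy hc hd

theorem linearIndependent_pair_single_one {R ι : Type*} [Ring R] [DecidableEq ι] {a b : ι}
    (hab : a ≠ b) : LinearIndependent R ![(Pi.single a 1 : ι → R), Pi.single b 1] := by
  refine LinearIndependent.pair_iff.mpr fun s t hst => ⟨?_, ?_⟩
  · simpa [hab] using congrFun hst a
  · simpa [hab.symm] using congrFun hst b

section InnerProduct

variable {ι : Type*} [Fintype ι] [DecidableEq ι]

theorem inn_single_one_self (a : ι) : inn (Pi.single a 1) (Pi.single a 1) = 1 := by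
  simp [inn, Pi.single_apply]

theorem inn_smul_single_add_smul_single_self {a b : ι} (hab : a ≠ b) (c d : ℂ) :
    inn (c • Pi.single a 1 + d • Pi.single b 1) (c • Pi.single a 1 + d • Pi.single b 1) =
      starRingEnd ℂ c * c + starRingEnd ℂ d * d := by
  simp [inn, Pi.single_apply, mul_add, Finset.sum_add_distrib, hab, hab.symm]

end InnerProduct

theorem stmt1_general {n : ℕ} (hn : 2 ≤ n) (L : (Fin n → ℂ) →ₗ[ℂ] (Fin n × Fin n → ℂ)) :
    ¬ ∀ α : Fin n → ℂ, inn α α = 1 → L α = tens α α := by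
  intro hclone
  obtain ⟨a, b, hab⟩ : ∃ a b : Fin n, a ≠ b := (Fin.nontrivial_iff_two_le.mpr hn).exists_pair_ne
  have hentangled : IsEntangled
      (L ((3 / 5 : ℂ) • Pi.single a 1 + (4 / 5 : ℂ) • Pi.single b 1)) :=
    isEntangled_map_smul_add_smul (hclone _ (inn_single_one_self a))
      (hclone _ (inn_single_one_self b)) (linearIndependent_pair_single_one hab)
      (by norm_num) (by norm_num)
  refine hentangled _ _ (hclone _ ?_)
  rw [inn_smul_single_add_smul_single_self hab]
  norm_num [Complex.conj_ofNat]

/-- The no-cloning theorem: for `n ≥ 2` there is no unitary `U` on `ℂⁿ ⊗ ℂⁿ` and unit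
vector `ψ₀` such that `U (α ⊗ ψ₀) = α ⊗ α` for every unit vector `α`. -/
theorem stmt1 (n : ℕ) (hn : 2 ≤ n) :
    ¬ ∃ (U : Matrix (Fin n × Fin n) (Fin n × Fin n) ℂ) (ψ₀ : Fin n → ℂ),
        U ∈ Matrix.unitaryGroup (Fin n × Fin n) ℂ ∧ inn ψ₀ ψ₀ = 1 ∧
        ∀ α : Fin n → ℂ, inn α α = 1 → U.mulVec (tens α ψ₀) = tens α α := by
  rintro ⟨U, ψ₀, -, -, hclone⟩
  exact stmt1_general hn (U.mulVecLin ∘ₗ tensRight n ψ₀) hclone
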